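/- arXiv:1111.1498 — 10 statements merged into one kernel-verified Lean document; each statement's English description precedes it below -/
import Mathlib

section
/- Let P be a finite partially ordered set, F a field, n : P → ℕ, and M a square block matrix indexed by Σ i : P, Fin (n i) with entries in F that lies in the block incidence algebra I(P). Then M is invertible (a unit of the matrix ring) if and only if for every i ∈ P the diagonal block M_ii is invertible. Moreover, when M is invertible its inverse M⁻¹ also lies in I(P), and for every i ∈ P the diagonal block (M⁻¹)_ii equals (M_ii)⁻¹. -/
/-- A block matrix, with rows indexed by `Σ i : P, Fin (n i)` and columns by
`Σ j : P, Fin (m j)`, lies in the block incidence algebra of the poset `P` if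
the block `M_{ij}` vanishes whenever `¬ (j ≤ i)`. -/
def BlockIncidence {P : Type*} [PartialOrder P] {R : Type*} [Zero R] {n m : P → ℕ}
    (M : Matrix (Σ i : P, Fin (n i)) (Σ j : P, Fin (m j)) R) : Prop :=
  ∀ (i : P) (a : Fin (n i)) (j : P) (b : Fin (m j)), ¬ (j ≤ i) → M ⟨i, a⟩ ⟨j, b⟩ = 0

/-- The `i`-th diagonal block of a square block matrix. -/
def diagBlock {P : Type*} {R : Type*} {n : P → ℕ}
    (M : Matrix (Σ i : P, Fin (n i)) (Σ j : P, Fin (n j)) R) (i : P) :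
    Matrix (Fin (n i)) (Fin (n i)) R :=
  Matrix.of fun a b => M ⟨i, a⟩ ⟨i, b⟩

theorem blockIncidence_mul_aux {P : Type*} [PartialOrder P] [Fintype P]
    {F : Type*} [Field F] {n : P → ℕ}
    {A B : Matrix (Σ i : P, Fin (n i)) (Σ j : P, Fin (n j)) F}
    (hA : BlockIncidence A) (hB : BlockIncidence B) : BlockIncidence (A * B) := by
  intro i a j b hij
  rw [Matrix.mul_apply]
  refine Finset.sum_eq_zero ?_
  rintro ⟨k, c⟩ -
  by_cases h : k ≤ i
  · rw [hB k c j b (fun h' => hij (h'.trans h)), mul_zero]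
  · rw [hA i a k c h, zero_mul]

theorem diagBlock_mul_aux {P : Type*} [PartialOrder P] [Fintype P]
    {F : Type*} [Field F] {n : P → ℕ}
    {A B : Matrix (Σ i : P, Fin (n i)) (Σ j : P, Fin (n j)) F}
    (hA : BlockIncidence A) (hB : BlockIncidence B) (i : P) :
    diagBlock (A * B) i = diagBlock A i * diagBlock B i := by
  ext a b
  simp only [diagBlock, Matrix.of_apply, Matrix.mul_apply, Fintype.sum_sigma]
  refine Finset.sum_eq_single i ?_ (by simp)
  intro k _ hk
  refine Finset.sum_eq_zero fun c _ => ?_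
  by_cases h : k ≤ i
  · rw [hB k c i b (fun h' => hk (le_antisymm h h')), mul_zero]
  · rw [hA i a k c h, zero_mul]

theorem diagBlock_one_aux {P : Type*} [DecidableEq P]
    {F : Type*} [Field F] {n : P → ℕ} (i : P) :
    diagBlock (1 : Matrix (Σ i : P, Fin (n i)) (Σ j : P, Fin (n j)) F) i = 1 := by
  ext a b
  simp [diagBlock, Matrix.one_apply]

theorem blockIncidence_inv_aux {P : Type*} [PartialOrder P] [Fintype P] [DecidableEq P]
    {F : Type*} [Field F] {n : P → ℕ}
    {M : Matrix (Σ i : P, Fin (n i)) (Σ j : P, Fin (n j)) F}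
    (hM : BlockIncidence M) (hu : IsUnit M) : BlockIncidence M⁻¹ := by
  let S : Submodule F (Matrix (Σ i : P, Fin (n i)) (Σ j : P, Fin (n j)) F) :=
    { carrier := {A | BlockIncidence A}
      add_mem' := fun {A B} hA hB i a j b h => by
        rw [Matrix.add_apply, hA i a j b h, hB i a j b h, add_zero]
      zero_mem' := fun i a j b h => rfl
      smul_mem' := fun c A hA i a j b h => by
        rw [Matrix.smul_apply, hA i a j b h, smul_zero] }
  let L : S →ₗ[F] S := (LinearMap.mulLeft F M).restrict
    (p := S) (q := S) (fun A hA => blockIncidence_mul_aux hM hA)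
  have hinj : Function.Injective L := by
    intro A B h
    have h' : M * A.1 = M * B.1 := congrArg Subtype.val h
    exact Subtype.ext (hu.mul_left_cancel h')
  have hone : (1 : Matrix (Σ i : P, Fin (n i)) (Σ j : P, Fin (n j)) F) ∈ S := by
    intro i a j b h
    refine Matrix.one_apply_ne fun h' => h ?_
    rw [(Sigma.mk.inj h').1]
  obtain ⟨N, hN⟩ := LinearMap.injective_iff_surjective.mp hinj ⟨1, hone⟩
  have h' : M * N.1 = 1 := congrArg Subtype.val hN
  rw [Matrix.inv_eq_right_inv h']
  exact N.2

/-- A block matrix in the incidence algebra of a poset over a field is invertible iff all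
its diagonal blocks are invertible; moreover, its inverse is again in the incidence algebra
and the diagonal blocks of the inverse are the inverses of the diagonal blocks. -/
theorem blockIncidence_isUnit_iff {P : Type*} [PartialOrder P] [Fintype P] [DecidableEq P]
    {F : Type*} [Field F] (n : P → ℕ)
    (M : Matrix (Σ i : P, Fin (n i)) (Σ j : P, Fin (n j)) F)
    (hM : BlockIncidence M) :
    (IsUnit M ↔ ∀ i : P, IsUnit (diagBlock M i)) ∧
    (IsUnit M →
      BlockIncidence M⁻¹ ∧ ∀ i : P, diagBlock M⁻¹ i = (diagBlock M i)⁻¹) := by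
  have key : IsUnit M → BlockIncidence M⁻¹ ∧
      ∀ i : P, diagBlock M i * diagBlock M⁻¹ i = 1 := by
    intro hu
    have hI := blockIncidence_inv_aux hM hu
    refine ⟨hI, fun i => ?_⟩
    rw [← diagBlock_mul_aux hM hI,
      Matrix.mul_nonsing_inv _ ((Matrix.isUnit_iff_isUnit_det _).mp hu), diagBlock_one_aux]
  refine ⟨⟨fun hu i => ?_, fun h => ?_⟩, fun hu => ⟨(key hu).1, fun i => ?_⟩⟩
  · exact IsUnit.of_mul_eq_one _ ((key hu).2 i)
  · rw [← Matrix.mulVec_injective_iff_isUnit]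
    have hz : ∀ v, M.mulVec v = 0 → v = 0 := by
      intro v hv
      have hall : ∀ i : P, (fun a => v ⟨i, a⟩) = (0 : Fin (n i) → F) := by
        intro i
        induction i using (wellFounded_lt (α := P)).induction with
        | _ i ih =>
          apply Matrix.mulVec_injective_iff_isUnit.mpr (h i)
          rw [Matrix.mulVec_zero]
          ext a
          have h1 := congrFun hv ⟨i, a⟩
          simp only [Matrix.mulVec, dotProduct, Fintype.sum_sigma] at h1
          rw [Finset.sum_eq_single i ?_ (by simp)] at h1
          · exact h1
          · intro k _ hk
            refine Finset.sum_eq_zero fun c _ => ?_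
            by_cases hki : k ≤ i
            · have h2 : v ⟨k, c⟩ = 0 := congrFun (ih k (lt_of_le_of_ne hki hk)) c
              rw [h2, mul_zero]
            · rw [hM i a k c hki, zero_mul]
      ext ⟨i, a⟩
      exact congrFun (hall i) a
    intro v w hvw
    refine sub_eq_zero.mp (hz _ ?_)
    rw [Matrix.mulVec_sub]
    exact sub_eq_zero.mpr hvw
  · exact (Matrix.inv_eq_right_inv ((key hu).2 i)).symm
end

section
/- Let P be a finite partially ordered set, F a field, and M : Matrix P P F a matrix with M i j = 0 whenever ¬ (j ≤ i) and with M i i ≠ 0 for every i ∈ P (so M is invertible). Then for every i ∈ P one has (M⁻¹) i i = (M i i)⁻¹, and for all i ≠ j one has (M⁻¹) i j = (M i i)⁻¹ * S(i,j), where S(i,j) is the sum, over all finite strictly increasing chains j = c₀ < c₁ < ⋯ < c_m = i (m ≥ 1) in P, of the products ∏_{t=0}^{m-1} ( − M c_{t+1} c_t * (M c_t c_t)⁻¹ ). In particular (M⁻¹) i j = 0 whenever ¬ (j ≤ i), since then no such chain exists. -/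
/-- The product `∏_{t=0}^{m-1} (− M c_{t+1} c_t * (M c_t c_t)⁻¹)` associated to a
list `[c₀, c₁, …, c_m]` of elements of `P`. -/
def chainProd {P : Type*} {F : Type*} [Field F] (M : Matrix P P F) : List P → F
  | [] => 1
  | [_] => 1
  | a :: b :: rest => (-M b a * (M a a)⁻¹) * chainProd M (b :: rest)

def chainSet {P : Type*} [PartialOrder P] (i j : P) : Set (List P) :=
  {l | l.IsChain (· < ·) ∧ l.head? = some j ∧ l.getLast? = some i}

theorem chainSet_finite {P : Type*} [PartialOrder P] [Fintype P] (i j : P) :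
    (chainSet i j).Finite := by
  classical
  apply Set.Finite.subset (s := {l : List P | l.length ≤ Fintype.card P})
  · exact List.finite_length_le P _
  · rintro l ⟨h, -, -⟩
    have h2 : l.Nodup := (List.isChain_iff_pairwise.1 h).imp (fun h => ne_of_lt h)
    exact h2.length_le_card

theorem chainSet_le {P : Type*} [PartialOrder P] {i j : P} {l : List P}
    (h : l ∈ chainSet i j) : l = [j] ∧ i = j ∨ 2 ≤ l.length ∧ j < i := by
  obtain ⟨h1, h2, h3⟩ := h
  match l, h1, h2, h3 with
  | [a], h1, h2, h3 => simp at h2 h3; left; subst h2; simp [h3]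
  | a :: b :: r, h1, h2, h3 =>
    right
    simp only [List.head?_cons, Option.some.injEq] at h2
    subst h2
    refine ⟨by simp, ?_⟩
    have hp := List.isChain_iff_pairwise.1 h1
    rw [List.pairwise_cons] at hp
    apply hp.1
    rw [List.getLast?_cons_cons] at h3
    exact List.mem_of_getLast? h3

theorem chainSet_rec {P : Type*} [PartialOrder P] {i j : P} (hij : i ≠ j) :
    chainSet i j = ⋃ k ∈ {k | j < k}, (List.cons j) '' chainSet i k := by
  ext l
  simp only [Set.mem_iUnion, Set.mem_image, Set.mem_ofPred_eq, exists_prop]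
  constructor
  · intro h
    obtain ⟨h1, h2, h3⟩ := h
    match l, h1, h2, h3 with
    | [a], h1, h2, h3 => simp at h2 h3; exact absurd (h3.symm.trans h2) hij
    | a :: b :: r, h1, h2, h3 =>
      simp only [List.head?_cons, Option.some.injEq] at h2
      subst h2
      rw [List.isChain_cons_cons] at h1
      rw [List.getLast?_cons_cons] at h3
      exact ⟨b, h1.1, b :: r, ⟨h1.2, rfl, h3⟩, rfl⟩
  · rintro ⟨k, hk, l', ⟨h1, h2, h3⟩, rfl⟩
    match l', h1, h2, h3 with
    | b :: r, h1, h2, h3 =>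
      simp only [List.head?_cons, Option.some.injEq] at h2
      subst h2
      exact ⟨List.isChain_cons_cons.2 ⟨hk, h1⟩, rfl, by rwa [List.getLast?_cons_cons]⟩

theorem chainSum_self {P : Type*} [PartialOrder P] {F : Type*} [Field F] (M : Matrix P P F)
    (i : P) : ∑ᶠ l ∈ chainSet i i, chainProd M l = 1 := by
  have : chainSet i i = {[i]} := by
    ext l
    constructor
    · intro h
      rcases chainSet_le h with h | h
      · exact h.1
      · exact absurd h.2 (lt_irrefl _)
    · rintro rfl
      simp [chainSet]
  rw [this, finsum_mem_singleton]
  simp [chainProd]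

theorem chainSum_zero {P : Type*} [PartialOrder P] {F : Type*} [Field F] (M : Matrix P P F)
    (i j : P) (h : ¬ j ≤ i) : ∑ᶠ l ∈ chainSet i j, chainProd M l = 0 := by
  have : chainSet i j = ∅ := by
    ext l
    simp only [Set.mem_empty_iff_false, iff_false]
    intro hl
    rcases chainSet_le hl with h' | h'
    · exact h h'.2.ge
    · exact h h'.2.le
  rw [this, finsum_mem_empty]

theorem chainSum_rec {P : Type*} [PartialOrder P] [Fintype P] {F : Type*} [Field F]
    (M : Matrix P P F) {i j : P} (hij : i ≠ j) :
    ∑ᶠ l ∈ chainSet i j, chainProd M l =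
      ∑ᶠ k ∈ {k | j < k}, (-M k j * (M j j)⁻¹) * ∑ᶠ l ∈ chainSet i k, chainProd M l := by
  rw [chainSet_rec hij, finsum_mem_biUnion]
  · refine finsum_mem_congr rfl fun k _ => ?_
    rw [finsum_mem_image (List.cons_injective.injOn), mul_finsum_mem]
    refine finsum_mem_congr rfl fun l hl => ?_
    obtain ⟨h1, h2, h3⟩ := hl
    match l, h2 with
    | b :: r, h2 =>
      simp only [List.head?_cons, Option.some.injEq] at h2
      subst h2
      rfl
  · intro k _ k' _ hkk
    rw [Function.onFun, Set.disjoint_left]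
    rintro _ ⟨l, hl, rfl⟩ ⟨l', hl', h⟩
    obtain rfl := List.cons_injective h
    exact hkk (Option.some.inj (hl.2.1.symm.trans hl'.2.1))
  · exact Set.toFinite _
  · exact fun k _ => (chainSet_finite i k).image _

/-- Explicit formula for the inverse of a matrix in the incidence algebra of a finite poset:
the diagonal entries of the inverse are the inverses of the diagonal entries, and the
off-diagonal entry `(M⁻¹) i j` equals `(M i i)⁻¹` times the sum, over all strictly
increasing chains `j = c₀ < c₁ < ⋯ < c_m = i` (with `m ≥ 1`), of the products
`∏_t (− M c_{t+1} c_t * (M c_t c_t)⁻¹)`.  In particular `(M⁻¹) i j = 0` whenever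
`¬ (j ≤ i)`. -/
theorem incidence_inv_formula {P : Type*} [PartialOrder P] [Fintype P] [DecidableEq P]
    {F : Type*} [Field F] (M : Matrix P P F)
    (hsp : ∀ i j : P, ¬ (j ≤ i) → M i j = 0)
    (hdiag : ∀ i : P, M i i ≠ 0) :
    IsUnit M ∧
    (∀ i : P, M⁻¹ i i = (M i i)⁻¹) ∧
    (∀ i j : P, i ≠ j →
      M⁻¹ i j = (M i i)⁻¹ *
        ∑ᶠ l ∈ {l : List P | l.Chain' (· < ·) ∧ l.head? = some j ∧
            l.getLast? = some i ∧ 2 ≤ l.length},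
          chainProd M l) ∧
    (∀ i j : P, ¬ (j ≤ i) → M⁻¹ i j = 0) := by
  classical
  set T : P → P → F := fun i j => ∑ᶠ l ∈ chainSet i j, chainProd M l with hT
  set N : Matrix P P F := Matrix.of fun i j => (M i i)⁻¹ * T i j with hN
  have hNM : N * M = 1 := by
    ext i j
    rw [Matrix.mul_apply, ← Finset.add_sum_erase _ _ (Finset.mem_univ j)]
    by_cases hij : i = j
    · subst hij
      rw [Finset.sum_eq_zero, Matrix.one_apply_eq]
      · simp [hN, hT, chainSum_self, hdiag]
      · intro k hk
        by_cases hk2 : i ≤ k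
        · have : ¬ k ≤ i := fun h => (Finset.mem_erase.1 hk).1 (le_antisymm h hk2)
          simp [hN, hT, chainSum_zero M i k this]
        · simp [hsp k i hk2]
    · rw [Matrix.one_apply_ne hij]
      have hrec : T i j = ∑ k ∈ Finset.univ.erase j, (-M k j * (M j j)⁻¹) * T i k := by
        simp only [hT]
        rw [chainSum_rec M hij, finsum_mem_eq_finite_toFinset_sum _ (Set.toFinite _)]
        apply Finset.sum_subset
        · intro k hk
          simp at hk
          simp [hk.ne']
        · intro k hk hk2
          have h1 := (Finset.mem_erase.1 hk).1
          have h2 : ¬ j ≤ k := fun h => hk2 (by simpa using lt_of_le_of_ne h (Ne.symm h1))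
          simp [hsp k j h2]
      simp only [hN, Matrix.of_apply]
      rw [hrec, Finset.mul_sum, Finset.sum_mul, ← Finset.sum_add_distrib]
      apply Finset.sum_eq_zero
      intro k _
      have := hdiag j
      field_simp
      ring
  have hinv : M⁻¹ = N := Matrix.inv_eq_left_inv hNM
  refine ⟨IsUnit.of_mul_eq_one_right N hNM, ?_, ?_, ?_⟩
  · intro i
    simp [hinv, hN, hT, chainSum_self]
  · intro i j hij
    rw [hinv]
    simp only [hN, hT, Matrix.of_apply]
    congr 1
    refine finsum_mem_congr ?_ fun _ _ => rfl
    ext l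
    constructor
    · intro h
      rcases chainSet_le h with h' | h'
      · exact absurd h'.2 hij
      · exact ⟨h.1, h.2.1, h.2.2, h'.1⟩
    · rintro ⟨a, b, c, -⟩
      exact ⟨a, b, c⟩
  · intro i j h
    simp [hinv, hN, hT, chainSum_zero M i j h]
end

section
/- Let P be a finite partially ordered set, n, m : P → ℕ, N : ℕ, and let (A_K, B_K, C_K, D_K) be real matrices of sizes N×N, N×(Σ j, n j), (Σ i, m i)×N, and (Σ i, m i)×(Σ j, n j) respectively. Suppose the transfer function K = C_K' * (X • 1 − A_K')⁻¹ * B_K' + D_K' over RatFunc ℝ satisfies K (i,a) (j,b) = 0 whenever ¬ (j ≤ i). Then there exist N' : ℕ, a labeling σ : Fin N' → P, and real matrices A', B', C', D' of sizes N'×N', N'×(Σ j, n j), (Σ i, m i)×N', and (Σ i, m i)×(Σ j, n j) with the same transfer function (i.e. C'' * (X • 1 − A'')⁻¹ * B'' + D'' = K over RatFunc ℝ) such that A' a b = 0 whenever ¬ (σ b ≤ σ a), B' a (j,c) = 0 whenever ¬ (j ≤ σ a), C' (i,c) b = 0 whenever ¬ (σ b ≤ i), and D' (i,c) (j,d) =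 0 whenever ¬ (j ≤ i); that is, the controller admits a realization in which all four state-space matrices are block lower triangular with respect to the poset. -/
set_option synthInstance.maxHeartbeats 1000000

/-- The transfer function `C (X·1 − A)⁻¹ B + D` of the realization `(A, B, C, D)`,
a matrix over the field of rational functions. -/
noncomputable def transferFn {F : Type*} [Field F] {N m q : Type*} [Fintype N] [DecidableEq N]
    (A : Matrix N N F) (B : Matrix N m F) (C : Matrix q N F) (D : Matrix q m F) :
    Matrix q m (RatFunc F) :=
  C.map RatFunc.C * ((RatFunc.X : RatFunc F) • (1 : Matrix N N (RatFunc F)) -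
    A.map RatFunc.C)⁻¹ * B.map RatFunc.C + D.map RatFunc.C

lemma tf_isUnit_det {N : ℕ} (A : Matrix (Fin N) (Fin N) ℝ) :
    IsUnit ((RatFunc.X : RatFunc ℝ) • (1 : Matrix (Fin N) (Fin N) (RatFunc ℝ)) -
      A.map RatFunc.C).det := by
  have h : ((RatFunc.X : RatFunc ℝ) • (1 : Matrix (Fin N) (Fin N) (RatFunc ℝ)) -
      A.map RatFunc.C) = (algebraMap (Polynomial ℝ) (RatFunc ℝ)).mapMatrix A.charmatrix := by
    ext i j
    by_cases hij : i = j
    · subst hij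
      simp [Matrix.charmatrix_apply]
    · simp [Matrix.charmatrix_apply, hij]
  rw [h, ← RingHom.map_det, isUnit_iff_ne_zero]
  intro h0
  exact (Matrix.charpoly_monic A).ne_zero
    ((map_eq_zero_iff _ (RatFunc.algebraMap_injective ℝ)).1 h0)

lemma tf_submatrix {M M' m q : Type*} [Fintype M] [DecidableEq M] [Fintype M'] [DecidableEq M']
    (e : M' ≃ M) (A : Matrix M M ℝ) (B : Matrix M m ℝ) (C : Matrix q M ℝ) (D : Matrix q m ℝ) :
    transferFn (A.submatrix e e) (B.submatrix e id) (C.submatrix id e) D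
      = transferFn A B C D := by
  unfold transferFn
  have h : (RatFunc.X : RatFunc ℝ) • (1 : Matrix M' M' (RatFunc ℝ)) -
      (A.submatrix e e).map RatFunc.C = ((RatFunc.X : RatFunc ℝ) • (1 : Matrix M M (RatFunc ℝ)) -
      A.map RatFunc.C).submatrix e e := by
    rw [Matrix.submatrix_sub, Matrix.submatrix_smul]
    simp [Matrix.submatrix_map]
  rw [h, Matrix.inv_submatrix_equiv, ← Matrix.submatrix_map, ← Matrix.submatrix_map,
    Matrix.submatrix_mul_equiv, Matrix.submatrix_mul_equiv]
  simp

lemma tf_blockInv {P : Type*} [Fintype P] [DecidableEq P] {N : ℕ}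
    (A : Matrix (Fin N) (Fin N) ℝ) :
    ((RatFunc.X : RatFunc ℝ) • (1 : Matrix (Fin N × P) (Fin N × P) (RatFunc ℝ)) -
      (Matrix.blockDiagonal (fun _ : P => A)).map RatFunc.C)⁻¹ =
    Matrix.blockDiagonal (fun _ : P => ((RatFunc.X : RatFunc ℝ) •
      (1 : Matrix (Fin N) (Fin N) (RatFunc ℝ)) - A.map RatFunc.C)⁻¹) := by
  apply Matrix.inv_eq_right_inv
  have h : (RatFunc.X : RatFunc ℝ) • (1 : Matrix (Fin N × P) (Fin N × P) (RatFunc ℝ)) -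
      (Matrix.blockDiagonal (fun _ : P => A)).map RatFunc.C =
      Matrix.blockDiagonal (fun _ : P => ((RatFunc.X : RatFunc ℝ) •
      (1 : Matrix (Fin N) (Fin N) (RatFunc ℝ)) - A.map RatFunc.C)) := by
    ext ⟨a, p⟩ ⟨b, q⟩
    by_cases hpq : p = q
    · subst hpq
      simp [Matrix.blockDiagonal_apply, Matrix.one_apply]
    · simp [Matrix.blockDiagonal_apply, Matrix.one_apply, hpq]
  rw [h, ← Matrix.blockDiagonal_mul]
  simp_rw [Matrix.mul_nonsing_inv _ (tf_isUnit_det A)]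
  exact Matrix.blockDiagonal_one

/-- Every controller whose transfer function is poset-causal (lies in the block incidence
algebra of the poset `P`) admits a state-space realization in which all four matrices
`(A', B', C', D')` are block lower triangular with respect to a labeling `σ` of the
controller states by elements of the poset. -/
theorem posetCausal_controller_triangular_realization
    {P : Type*} [PartialOrder P] [Fintype P] [DecidableEq P]
    (n m : P → ℕ) (N : ℕ)
    (A_K : Matrix (Fin N) (Fin N) ℝ)
    (B_K : Matrix (Fin N) (Σ j : P, Fin (n j)) ℝ)
    (C_K : Matrix (Σ i : P, Fin (m i)) (Fin N) ℝ)
    (D_K : Matrix (Σ i : P, Fin (m i)) (Σ j : P, Fin (n j)) ℝ)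
    (hK : ∀ (i : P) (a : Fin (m i)) (j : P) (b : Fin (n j)), ¬ (j ≤ i) →
      transferFn A_K B_K C_K D_K ⟨i, a⟩ ⟨j, b⟩ = 0) :
    ∃ (N' : ℕ) (σ : Fin N' → P)
      (A' : Matrix (Fin N') (Fin N') ℝ)
      (B' : Matrix (Fin N') (Σ j : P, Fin (n j)) ℝ)
      (C' : Matrix (Σ i : P, Fin (m i)) (Fin N') ℝ)
      (D' : Matrix (Σ i : P, Fin (m i)) (Σ j : P, Fin (n j)) ℝ),
      transferFn A' B' C' D' = transferFn A_K B_K C_K D_K ∧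
      (∀ a b : Fin N', ¬ (σ b ≤ σ a) → A' a b = 0) ∧
      (∀ (a : Fin N') (j : P) (c : Fin (n j)), ¬ (j ≤ σ a) → B' a ⟨j, c⟩ = 0) ∧
      (∀ (i : P) (c : Fin (m i)) (b : Fin N'), ¬ (σ b ≤ i) → C' ⟨i, c⟩ b = 0) ∧
      (∀ (i : P) (c : Fin (m i)) (j : P) (d : Fin (n j)), ¬ (j ≤ i) → D' ⟨i, c⟩ ⟨j, d⟩ = 0) := by
  classical
  let e : Fin (Fintype.card (Fin N × P)) ≃ Fin N × P := (Fintype.equivFin (Fin N × P)).symm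
  let B : Matrix (Fin N × P) (Σ j : P, Fin (n j)) ℝ :=
    fun s jc => if jc.1 = s.2 then B_K s.1 jc else 0
  let C : Matrix (Σ i : P, Fin (m i)) (Fin N × P) ℝ :=
    fun ic s => if s.2 ≤ ic.1 then C_K ic s.1 else 0
  let D : Matrix (Σ i : P, Fin (m i)) (Σ j : P, Fin (n j)) ℝ :=
    fun ic jc => if jc.1 ≤ ic.1 then D_K ic jc else 0
  refine ⟨_, fun a => (e a).2, (Matrix.blockDiagonal (fun _ : P => A_K)).submatrix e e,
    B.submatrix e id, C.submatrix id e, D, ?_, ?_, ?_, ?_, ?_⟩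
  · rw [tf_submatrix]
    ext ⟨i, c⟩ ⟨j, d⟩
    have key : transferFn (Matrix.blockDiagonal (fun _ : P => A_K)) B C D ⟨i, c⟩ ⟨j, d⟩ =
        if j ≤ i then transferFn A_K B_K C_K D_K ⟨i, c⟩ ⟨j, d⟩ else 0 := by
      have hB : ∀ s p jc, B (s, p) jc = if jc.1 = p then B_K s jc else 0 := fun _ _ _ => rfl
      have hC : ∀ ic s p, C ic (s, p) = if p ≤ ic.1 then C_K ic s else 0 := fun _ _ _ => rfl
      have hD : ∀ ic jc, D ic jc = if jc.1 ≤ ic.1 then D_K ic jc else 0 := fun _ _ => rfl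
      unfold transferFn
      rw [tf_blockInv]
      generalize ((RatFunc.X : RatFunc ℝ) •
        (1 : Matrix (Fin N) (Fin N) (RatFunc ℝ)) - A_K.map RatFunc.C)⁻¹ = R
      simp only [Matrix.add_apply, Matrix.mul_apply, Matrix.map_apply, Fintype.sum_prod_type,
        Matrix.blockDiagonal_apply, hB, hC, hD, apply_ite (RatFunc.C : ℝ →+* RatFunc ℝ), map_zero,
        mul_ite, ite_mul, mul_zero, zero_mul, Finset.sum_ite_eq, Finset.sum_ite_eq',
        Finset.mem_univ, if_true]
      by_cases h : j ≤ i <;> simp [h]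
    rw [key]
    split_ifs with h
    · rfl
    · exact (hK i c j d h).symm
  · intro a b h
    have : (e a).2 ≠ (e b).2 := fun h' => h h'.ge
    simp [Matrix.blockDiagonal_apply, this]
  · intro a j c h
    have : j ≠ (e a).2 := fun h' => h h'.le
    exact if_neg this
  · intro i c b h
    exact if_neg h
  · intro i c j d h
    exact if_neg h
end

section
/- Let F be a field and let A, B, C, D be matrices over F of sizes N×N, N×m, q×N, and q×m respectively. Then the transfer function C' * (X • 1 − A')⁻¹ * B' + D' over RatFunc F is the zero matrix if and only if D = 0 and C * A^k * B = 0 for every natural number k. -/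
set_option synthInstance.maxHeartbeats 1000000

open Polynomial in
theorem tf_adj_mem {F : Type*} [Field F] {N : ℕ} (A : Matrix (Fin N) (Fin N) F) (i j : Fin N) :
    (Matrix.charmatrix A).adjugate i j ∈ Polynomial.degreeLT F N := by
  have h := Matrix.mul_adjugate (Matrix.charmatrix A)
  have h2 := congrArg matPolyEquiv h
  rw [map_mul, Matrix.matPolyEquiv_charmatrix] at h2
  set a := matPolyEquiv (Matrix.charmatrix A).adjugate with ha
  have hN : Nonempty (Fin N) := ⟨i⟩
  rw [Polynomial.mem_degreeLT, Polynomial.degree_lt_iff_coeff_zero]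
  intro k hk
  rw [← matPolyEquiv_coeff_apply, ← ha]
  by_cases h0 : a = 0
  · simp [h0]
  have h3 := (monic_X_sub_C A).natDegree_mul' h0
  rw [h2, natDegree_X_sub_C] at h3
  have h4 : (matPolyEquiv ((Matrix.charmatrix A).det • (1 : Matrix (Fin N) (Fin N) F[X]))).natDegree
      ≤ N := by
    rw [natDegree_le_iff_coeff_eq_zero]
    intro n hn
    ext x y
    rw [matPolyEquiv_coeff_apply]
    have : (Matrix.charmatrix A).det.coeff n = 0 := by
      apply coeff_eq_zero_of_natDegree_lt
      have := Matrix.charpoly_natDegree_eq_dim A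
      rw [Matrix.charpoly, Fintype.card_fin] at this
      omega
    by_cases hxy : x = y <;> simp [Matrix.one_apply, hxy, this]
  rw [coeff_eq_zero_of_natDegree_lt (by omega)]
  rfl

open Polynomial in
/-- Numerator of the shifted transfer function. -/
noncomputable def tfQ {F : Type*} [Field F] {N m q : ℕ}
    (A : Matrix (Fin N) (Fin N) F) (B : Matrix (Fin N) (Fin m) F)
    (C : Matrix (Fin q) (Fin N) F) (k : ℕ) : Matrix (Fin q) (Fin m) F[X] :=
  (C * A ^ k).map Polynomial.C * (Matrix.charmatrix A).adjugate * B.map Polynomial.C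

open Polynomial in
theorem tfQ_mem {F : Type*} [Field F] {N m q : ℕ}
    (A : Matrix (Fin N) (Fin N) F) (B : Matrix (Fin N) (Fin m) F)
    (C : Matrix (Fin q) (Fin N) F) (k : ℕ) (i j) :
    tfQ A B C k i j ∈ Polynomial.degreeLT F N := by
  unfold tfQ
  rw [Matrix.mul_apply]
  refine Submodule.sum_mem _ fun x _ => ?_
  rw [Matrix.mul_apply, Matrix.map_apply, mul_comm, ← smul_eq_C_mul]
  refine Submodule.smul_mem _ _ (Submodule.sum_mem _ fun y _ => ?_)
  rw [Matrix.map_apply, ← smul_eq_C_mul]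
  exact Submodule.smul_mem _ _ (tf_adj_mem A _ _)

open Polynomial in
theorem tfQ_succ {F : Type*} [Field F] {N m q : ℕ}
    (A : Matrix (Fin N) (Fin N) F) (B : Matrix (Fin N) (Fin m) F)
    (C : Matrix (Fin q) (Fin N) F) (k : ℕ) :
    (X : F[X]) • tfQ A B C k = A.charpoly • (C * A ^ k * B).map Polynomial.C + tfQ A B C (k+1) := by
  have h := Matrix.mul_adjugate (Matrix.charmatrix A)
  have hc : Matrix.charmatrix A = (X : F[X]) • (1 : Matrix (Fin N) (Fin N) F[X])
      - A.map Polynomial.C := by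
    rw [Matrix.charmatrix, Matrix.smul_one_eq_diagonal]; rfl
  have h2 : (X : F[X]) • (Matrix.charmatrix A).adjugate = A.charpoly • 1
      + A.map Polynomial.C * (Matrix.charmatrix A).adjugate := by
    rw [Matrix.charpoly, ← h]
    nth_rw 2 [hc]
    rw [sub_mul, Matrix.smul_mul, one_mul, sub_add_cancel]
  unfold tfQ
  rw [← Matrix.smul_mul, ← Matrix.mul_smul, h2, pow_succ, ← Matrix.mul_assoc C,
    Matrix.map_mul (L := C * A ^ k) (M := A), Matrix.map_mul (L := C * A ^ k) (M := B)]
  simp only [Matrix.mul_add, Matrix.add_mul, Matrix.mul_assoc, Matrix.mul_smul, Matrix.smul_mul,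
    Matrix.one_mul]

open Polynomial in
theorem tf_const {F : Type*} [Field F] {N : ℕ} (A : Matrix (Fin N) (Fin N) F) (p : F[X])
    (hp : p ∈ Polynomial.degreeLT F N) (c : F) (h : A.charpoly * Polynomial.C c + p = 0) :
    c = 0 ∧ p = 0 := by
  have hc : c = 0 := by
    have h1 := congrArg (fun p => Polynomial.coeff p N) h
    have h2 := Matrix.charpoly_natDegree_eq_dim A
    rw [Fintype.card_fin] at h2
    have h3 := (Matrix.charpoly_monic A).coeff_natDegree
    rw [h2] at h3
    rw [Polynomial.mem_degreeLT] at hp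
    simpa [h3, coeff_eq_zero_of_degree_lt hp] using h1
  subst hc
  simpa using h

open Polynomial in
theorem tf_eq_iff {F : Type*} [Field F] {N m q : ℕ}
    (A : Matrix (Fin N) (Fin N) F) (B : Matrix (Fin N) (Fin m) F)
    (C : Matrix (Fin q) (Fin N) F) (D : Matrix (Fin q) (Fin m) F) :
    transferFn A B C D = 0 ↔ A.charpoly • D.map Polynomial.C + tfQ A B C 0 = 0 := by
  let f : F[X] →+* RatFunc F := algebraMap F[X] (RatFunc F)
  have hf : Function.Injective f := RatFunc.algebraMap_injective F
  have hfC : ∀ {a b : ℕ} (M : Matrix (Fin a) (Fin b) F),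
      (M.map Polynomial.C).map f = M.map RatFunc.C := by
    intro a b M; ext x y; simp [f]
  have hχ : f A.charpoly ≠ 0 := by
    rw [Ne, map_eq_zero_iff f hf]; exact (Matrix.charpoly_monic A).ne_zero
  have hc : (Matrix.charmatrix A).map f = (RatFunc.X : RatFunc F) • 1 - A.map RatFunc.C := by
    ext x y
    by_cases hxy : x = y <;>
      simp [Matrix.charmatrix_apply, Matrix.diagonal_apply, Matrix.one_apply, hxy, f]
  have hinv : ((RatFunc.X : RatFunc F) • (1 : Matrix (Fin N) (Fin N) (RatFunc F))
      - A.map RatFunc.C)⁻¹ = (f A.charpoly)⁻¹ • (Matrix.charmatrix A).adjugate.map f := by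
    apply Matrix.inv_eq_right_inv
    rw [← hc, Matrix.mul_smul, ← Matrix.map_mul, Matrix.mul_adjugate]
    ext x y
    by_cases hxy : x = y <;> simp [Matrix.one_apply, hxy]
    exact inv_mul_cancel₀ hχ
  have key : (A.charpoly • D.map Polynomial.C + tfQ A B C 0).map f
      = f A.charpoly • transferFn A B C D := by
    unfold transferFn tfQ
    rw [hinv, Matrix.mul_smul, Matrix.smul_mul, smul_add, smul_smul, mul_inv_cancel₀ hχ, one_smul,
      pow_zero, Matrix.mul_one, Matrix.map_add f (map_add f), Matrix.map_mul, Matrix.map_mul,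
      hfC, hfC, ← hfC D, add_comm]
    congr 1
    ext x y
    simp
  constructor
  · intro h
    rw [h, smul_zero] at key
    apply Matrix.map_injective hf
    exact key.trans (Matrix.map_zero f (map_zero f)).symm
  · intro h
    rw [h, Matrix.map_zero f (map_zero f)] at key
    exact (smul_eq_zero.mp key.symm).resolve_left hχ

/-- The transfer function of a realization `(A, B, C, D)` is the zero matrix if and only if
`D = 0` and all Markov parameters `C A^k B` vanish. -/
theorem transferFn_eq_zero_iff {F : Type*} [Field F] {N m q : ℕ}
    (A : Matrix (Fin N) (Fin N) F) (B : Matrix (Fin N) (Fin m) F)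
    (C : Matrix (Fin q) (Fin N) F) (D : Matrix (Fin q) (Fin m) F) :
    transferFn A B C D = 0 ↔ D = 0 ∧ ∀ k : ℕ, C * A ^ k * B = 0 := by
  rw [tf_eq_iff]
  have step : ∀ (M : Matrix (Fin q) (Fin m) F) (k : ℕ),
      A.charpoly • M.map Polynomial.C + tfQ A B C k = 0 → M = 0 ∧ tfQ A B C k = 0 := by
    intro M k h
    have h' : ∀ i j, M i j = 0 ∧ tfQ A B C k i j = 0 := fun i j =>
      tf_const A _ (tfQ_mem A B C k i j) _ (congrFun (congrFun h i) j)
    exact ⟨Matrix.ext fun i j => (h' i j).1, Matrix.ext fun i j => (h' i j).2⟩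
  constructor
  · intro h
    obtain ⟨hD, h0⟩ := step D 0 h
    have hk : ∀ k, tfQ A B C k = 0 := by
      intro k
      induction k with
      | zero => exact h0
      | succ k ih =>
        have := tfQ_succ A B C k
        rw [ih, smul_zero] at this
        exact (step _ _ this.symm).2
    refine ⟨hD, fun k => ?_⟩
    have := tfQ_succ A B C k
    rw [hk k, smul_zero] at this
    exact (step _ _ this.symm).1
  · rintro ⟨rfl, hM⟩
    have hk : ∀ k, tfQ A B C k = (Polynomial.X ^ k : Polynomial F) • tfQ A B C 0 := by
      intro k
      induction k with
      | zero => simp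
      | succ k ih =>
        have := tfQ_succ A B C k
        rw [hM k, Matrix.map_zero _ (map_zero _), smul_zero, zero_add, ih, smul_smul,
          ← pow_succ'] at this
        exact this.symm
    have h0 : tfQ A B C 0 = 0 := by
      ext1 i j
      by_contra hne
      have h1 := tfQ_mem A B C N i j
      rw [hk N, Polynomial.mem_degreeLT, Matrix.smul_apply, smul_eq_mul,
        Polynomial.degree_lt_iff_coeff_zero] at h1
      apply hne
      ext n
      have := h1 (n + N) (by omega)
      rw [Polynomial.coeff_X_pow_mul] at this
      simpa using this
    rw [h0, Matrix.map_zero _ (map_zero _), smul_zero, zero_add]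
end

section
/- Let P be a finite partially ordered set, n : P → ℕ, and M a real square block matrix indexed by Σ i : P, Fin (n i) lying in the block incidence algebra I(P). Then M is Hurwitz if and only if for every i ∈ P the diagonal block M_ii is Hurwitz. -/
/-- A real square matrix is Hurwitz if every complex eigenvalue has negative real part. -/
def IsHurwitz {k : Type*} [Fintype k] [DecidableEq k] (M : Matrix k k ℝ) : Prop :=
  ∀ z ∈ spectrum ℂ (M.map (algebraMap ℝ ℂ)), z.re < 0

open Matrix in
theorem toSquareBlock_charpoly_aux {P α : Type*} [DecidableEq P] [Fintype P] [DecidableEq α]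
    (n : P → ℕ) (M : Matrix (Σ i : P, Fin (n i)) (Σ j : P, Fin (n j)) ℂ)
    (f : P → α) (hf : Function.Injective f) (i : P) :
    (M.toSquareBlock (fun x => f x.1) (f i)).charpoly = (diagBlock M i).charpoly := by
  let g : Fin (n i) → {x : (Σ i : P, Fin (n i)) // f x.1 = f i} := fun a => ⟨⟨i, a⟩, rfl⟩
  have hg : Function.Bijective g := by
    constructor
    · intro a b h
      simpa [g] using h
    · rintro ⟨⟨j, a⟩, h⟩
      obtain rfl : j = i := hf h
      exact ⟨a, rfl⟩
  rw [← Matrix.charpoly_reindex (Equiv.ofBijective g hg).symm]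
  rfl

open Matrix in
theorem spectrum_aux {P : Type*} [PartialOrder P] [Fintype P] [DecidableEq P]
    (n : P → ℕ) (M : Matrix (Σ i : P, Fin (n i)) (Σ j : P, Fin (n j)) ℂ)
    (hM : BlockIncidence M) (z : ℂ) :
    z ∈ spectrum ℂ M ↔ ∃ i, z ∈ spectrum ℂ (diagBlock M i) := by
  let f : P → (LinearExtension P)ᵒᵈ := fun i => OrderDual.toDual (toLinearExtension i)
  have hf : Function.Injective f := fun a b h => h
  have hb : M.BlockTriangular (fun x => f x.1) := by
    rintro ⟨i, a⟩ ⟨j, b⟩ h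
    refine hM i a j b fun hji => ?_
    have h1 : toLinearExtension i < toLinearExtension j := h
    exact absurd (toLinearExtension.monotone hji) (not_le.2 h1)
  simp only [Matrix.mem_spectrum_iff_isRoot_charpoly]
  rw [hb.charpoly, Polynomial.isRoot_prod]
  constructor
  · rintro ⟨c, hc, hz⟩
    obtain ⟨⟨i, a⟩, -, rfl⟩ := Finset.mem_image.1 hc
    refine ⟨i, ?_⟩
    rw [← toSquareBlock_charpoly_aux n M f hf i]
    exact hz
  · rintro ⟨i, hz⟩
    have ha : Nonempty (Fin (n i)) := by
      by_contra hne
      rw [not_nonempty_iff] at hne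
      simp [Matrix.charpoly, Polynomial.IsRoot] at hz
    obtain ⟨a⟩ := ha
    refine ⟨f i, Finset.mem_image.2 ⟨⟨i, a⟩, Finset.mem_univ _, rfl⟩, ?_⟩
    rw [← toSquareBlock_charpoly_aux n M f hf i] at hz
    exact hz

/-- A real square block matrix in the block incidence algebra of a finite poset is Hurwitz
if and only if all of its diagonal blocks are Hurwitz. -/
theorem blockIncidence_isHurwitz_iff {P : Type*} [PartialOrder P] [Fintype P] [DecidableEq P]
    (n : P → ℕ)
    (M : Matrix (Σ i : P, Fin (n i)) (Σ j : P, Fin (n j)) ℝ)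
    (hM : BlockIncidence M) :
    IsHurwitz M ↔ ∀ i : P, IsHurwitz (diagBlock M i) := by
  have hM' : BlockIncidence (M.map (algebraMap ℝ ℂ)) := by
    intro i a j b h
    simp [hM i a j b h]
  have key := spectrum_aux n _ hM'
  have hd : ∀ i, diagBlock (M.map (algebraMap ℝ ℂ)) i
      = (diagBlock M i).map (algebraMap ℝ ℂ) := fun i => rfl
  simp only [hd] at key
  constructor
  · intro h i z hz
    exact h z ((key z).2 ⟨i, hz⟩)
  · intro h z hz
    obtain ⟨i, hi⟩ := (key z).1 hz
    exact h i z hi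
end

section
/- Let P be a finite partially ordered set, F a field, and fix block sizes so that P21 is a square block matrix, P22 a block matrix, and K a block matrix over F of compatible sizes. Assume P21 and P22 lie in the block incidence algebra I(P), that P21 is invertible with P21⁻¹ ∈ I(P), and that the matrix 1 − P22*K is invertible. Define Q := K * (1 − P22*K)⁻¹ * P21. Then: (a) the matrix 1 + P22*Q*P21⁻¹ is invertible and K = Q * P21⁻¹ * (1 + P22*Q*P21⁻¹)⁻¹; and (b) K lies in I(P) if and only if Q lies in I(P). -/
theorem BlockIncidence.mul_aux {P : Type*} [PartialOrder P] [Fintype P]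
    {F : Type*} [Field F] {n m l : P → ℕ}
    {A : Matrix (Σ i : P, Fin (n i)) (Σ j : P, Fin (m j)) F}
    {B : Matrix (Σ i : P, Fin (m i)) (Σ j : P, Fin (l j)) F}
    (hA : BlockIncidence A) (hB : BlockIncidence B) : BlockIncidence (A * B) := by
  intro i a j b hij
  rw [Matrix.mul_apply]
  refine Finset.sum_eq_zero fun k _ => ?_
  obtain ⟨k, c⟩ := k
  by_cases hk : k ≤ i
  · rw [hB k c j b (fun h => hij (h.trans hk)), mul_zero]
  · rw [hA i a k c hk, zero_mul]

theorem BlockIncidence.add_aux {P : Type*} [PartialOrder P]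
    {F : Type*} [Field F] {n m : P → ℕ}
    {A B : Matrix (Σ i : P, Fin (n i)) (Σ j : P, Fin (m j)) F}
    (hA : BlockIncidence A) (hB : BlockIncidence B) : BlockIncidence (A + B) := by
  intro i a j b hij
  rw [Matrix.add_apply, hA i a j b hij, hB i a j b hij, add_zero]

theorem BlockIncidence.sub_aux {P : Type*} [PartialOrder P]
    {F : Type*} [Field F] {n m : P → ℕ}
    {A B : Matrix (Σ i : P, Fin (n i)) (Σ j : P, Fin (m j)) F}
    (hA : BlockIncidence A) (hB : BlockIncidence B) : BlockIncidence (A - B) := by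
  intro i a j b hij
  rw [Matrix.sub_apply, hA i a j b hij, hB i a j b hij, sub_zero]

theorem BlockIncidence.one_aux {P : Type*} [PartialOrder P] [DecidableEq P]
    {F : Type*} [Field F] {n : P → ℕ} :
    BlockIncidence (1 : Matrix (Σ i : P, Fin (n i)) (Σ j : P, Fin (n j)) F) := by
  intro i a j b hij
  refine Matrix.one_apply_ne fun h => hij ?_
  rw [(Sigma.mk.inj h).1]

/-- The block incidence matrices as a submodule. -/
def blockIncSubmodule (P : Type*) [PartialOrder P] (F : Type*) [Field F] (n : P → ℕ) :
    Submodule F (Matrix (Σ i : P, Fin (n i)) (Σ j : P, Fin (n j)) F) where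
  carrier := {M | BlockIncidence M}
  add_mem' := fun hA hB => BlockIncidence.add_aux hA hB
  zero_mem' := fun _ _ _ _ _ => rfl
  smul_mem' := fun c M hM i a j b hij => by
    rw [Matrix.smul_apply, hM i a j b hij, smul_zero]

theorem BlockIncidence.inv_aux {P : Type*} [PartialOrder P] [Fintype P] [DecidableEq P]
    {F : Type*} [Field F] {n : P → ℕ}
    {A : Matrix (Σ i : P, Fin (n i)) (Σ j : P, Fin (n j)) F}
    (hA : BlockIncidence A) (hu : IsUnit A) : BlockIncidence A⁻¹ := by
  let f : blockIncSubmodule P F n →ₗ[F] blockIncSubmodule P F n :=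
    (LinearMap.mulLeft F A).restrict (fun _ hx => BlockIncidence.mul_aux hA hx)
  have hinj : Function.Injective f := by
    intro x y hxy
    have h : A * x.1 = A * y.1 := congrArg Subtype.val hxy
    exact Subtype.ext (hu.mul_left_cancel h)
  obtain ⟨B, hB⟩ := LinearMap.surjective_of_injective hinj ⟨1, BlockIncidence.one_aux⟩
  have h : A * B.1 = 1 := congrArg Subtype.val hB
  rw [Matrix.inv_eq_right_inv h]
  exact B.2

/-- The reparametrization `Q = K (1 − P22 K)⁻¹ P21` is a bijective change of variables:
`K` can be recovered from `Q` via `K = Q P21⁻¹ (1 + P22 Q P21⁻¹)⁻¹`, and `K` lies in the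
block incidence algebra of the poset iff `Q` does. -/
theorem reparametrization_incidence {P : Type*} [PartialOrder P] [Fintype P] [DecidableEq P]
    {F : Type*} [Field F] (n m : P → ℕ)
    (P21 : Matrix (Σ i : P, Fin (n i)) (Σ j : P, Fin (n j)) F)
    (P22 : Matrix (Σ i : P, Fin (n i)) (Σ j : P, Fin (m j)) F)
    (K : Matrix (Σ i : P, Fin (m i)) (Σ j : P, Fin (n j)) F)
    (h21 : BlockIncidence P21) (h22 : BlockIncidence P22)
    (h21unit : IsUnit P21) (h21inv : BlockIncidence P21⁻¹)
    (hIK : IsUnit (1 - P22 * K)) :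
    (IsUnit (1 + P22 * (K * (1 - P22 * K)⁻¹ * P21) * P21⁻¹) ∧
      K = (K * (1 - P22 * K)⁻¹ * P21) * P21⁻¹ *
        (1 + P22 * (K * (1 - P22 * K)⁻¹ * P21) * P21⁻¹)⁻¹) ∧
    (BlockIncidence K ↔ BlockIncidence (K * (1 - P22 * K)⁻¹ * P21)) := by
  have d21 : IsUnit P21.det := (Matrix.isUnit_iff_isUnit_det _).1 h21unit
  have dIK : IsUnit (1 - P22 * K).det := (Matrix.isUnit_iff_isUnit_det _).1 hIK
  have e1 : K * (1 - P22 * K)⁻¹ * P21 * P21⁻¹ = K * (1 - P22 * K)⁻¹ :=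
    Matrix.mul_nonsing_inv_cancel_right _ _ d21
  have e2 : 1 + P22 * (K * (1 - P22 * K)⁻¹ * P21) * P21⁻¹ = (1 - P22 * K)⁻¹ := by
    rw [Matrix.mul_assoc P22, e1, ← Matrix.mul_assoc]
    have h := Matrix.mul_nonsing_inv _ dIK
    rw [Matrix.sub_mul, Matrix.one_mul] at h
    exact (sub_eq_iff_eq_add.1 h).symm
  have u2 : IsUnit (1 + P22 * (K * (1 - P22 * K)⁻¹ * P21) * P21⁻¹) := by
    rw [e2]
    exact (Matrix.isUnit_nonsing_inv_iff).2 hIK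
  have e3 : K = (K * (1 - P22 * K)⁻¹ * P21) * P21⁻¹ *
        (1 + P22 * (K * (1 - P22 * K)⁻¹ * P21) * P21⁻¹)⁻¹ := by
    rw [e2, e1, Matrix.nonsing_inv_nonsing_inv _ dIK,
      Matrix.nonsing_inv_mul_cancel_right _ _ dIK]
  refine ⟨⟨u2, e3⟩, fun hK => ?_, fun hQ => ?_⟩
  · exact (hK.mul_aux ((BlockIncidence.one_aux.sub_aux (h22.mul_aux hK)).inv_aux hIK)).mul_aux h21
  · rw [e3]
    exact (hQ.mul_aux h21inv).mul_aux
      ((BlockIncidence.one_aux.add_aux ((h22.mul_aux hQ).mul_aux h21inv)).inv_aux u2)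
end

section
/- Let P be a finite partially ordered set, m, w : P → ℕ, L : ℕ, and let P11 : Matrix (Fin L) (Σ j : P, Fin (w j)) ℝ and P12 : Matrix (Fin L) (Σ i : P, Fin (m i)) ℝ be real matrices. Then the infimum, over all block matrices Q : Matrix (Σ i, Fin (m i)) (Σ j, Fin (w j)) ℝ lying in the block incidence algebra I(P), of the squared Frobenius norm ‖P11 + P12 * Q‖² (the sum of the squares of all entries), equals the sum over all column indices (j,b) of the infimum, over all vectors v : (Σ i : P, Fin (m i)) → ℝ satisfying v (i,a) = 0 whenever ¬ (j ≤ i), of the squared Euclidean norm ∑_{k : Fin L} (P11 k (j,b) + (P12.mulVec v) k)². -/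
/-- Column-wise separability of the Frobenius-norm optimal control problem over the block
incidence algebra: the infimum of `‖P11 + P12 Q‖²` over all `Q` in the incidence algebra
equals the sum over columns of the infima of the corresponding column problems, in which
only the sparsity pattern of the single column is enforced. -/
theorem frobenius_separability {P : Type*} [PartialOrder P] [Fintype P] [DecidableEq P]
    (m w : P → ℕ) (L : ℕ)
    (P11 : Matrix (Fin L) (Σ j : P, Fin (w j)) ℝ)
    (P12 : Matrix (Fin L) (Σ i : P, Fin (m i)) ℝ) :
    sInf {c : ℝ | ∃ Q : Matrix (Σ i : P, Fin (m i)) (Σ j : P, Fin (w j)) ℝ,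
        BlockIncidence Q ∧
        c = ∑ k : Fin L, ∑ jb : Σ j : P, Fin (w j), ((P11 + P12 * Q) k jb) ^ 2} =
    ∑ jb : Σ j : P, Fin (w j),
      sInf {c : ℝ | ∃ v : (Σ i : P, Fin (m i)) → ℝ,
        (∀ (i : P) (a : Fin (m i)), ¬ (jb.1 ≤ i) → v ⟨i, a⟩ = 0) ∧
        c = ∑ k : Fin L, (P11 k jb + P12.mulVec v k) ^ 2} := by
  set S : (Σ j : P, Fin (w j)) → Set ℝ := fun jb =>
    {c : ℝ | ∃ v : (Σ i : P, Fin (m i)) → ℝ,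
        (∀ (i : P) (a : Fin (m i)), ¬ (jb.1 ≤ i) → v ⟨i, a⟩ = 0) ∧
        c = ∑ k : Fin L, (P11 k jb + P12.mulVec v k) ^ 2} with hS
  change _ = ∑ jb, sInf (S jb)
  have hSb : ∀ jb, BddBelow (S jb) := by
    intro jb
    refine ⟨0, ?_⟩
    rintro c ⟨v, _, rfl⟩
    positivity
  have hSn : ∀ jb, (S jb).Nonempty := fun jb => ⟨_, 0, fun _ _ _ => rfl, rfl⟩
  have key : ∀ Q : Matrix (Σ i : P, Fin (m i)) (Σ j : P, Fin (w j)) ℝ,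
      ∑ k : Fin L, ∑ jb : Σ j : P, Fin (w j), ((P11 + P12 * Q) k jb) ^ 2 =
      ∑ jb : Σ j : P, Fin (w j), ∑ k : Fin L,
        (P11 k jb + P12.mulVec (fun x => Q x jb) k) ^ 2 := by
    intro Q
    rw [Finset.sum_comm]
    rfl
  apply le_antisymm
  · apply le_of_forall_pos_le_add
    intro ε hε
    set N : ℝ := (Fintype.card (Σ j : P, Fin (w j)) : ℝ) with hN
    have hN0 : 0 ≤ N := by positivity
    have hδ : 0 < ε / (N + 1) := by positivity
    have h1 : ∀ jb, ∃ v : (Σ i : P, Fin (m i)) → ℝ,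
        (∀ (i : P) (a : Fin (m i)), ¬ (jb.1 ≤ i) → v ⟨i, a⟩ = 0) ∧
        ∑ k : Fin L, (P11 k jb + P12.mulVec v k) ^ 2 < sInf (S jb) + ε / (N + 1) := by
      intro jb
      obtain ⟨c, ⟨v, hv, rfl⟩, hc⟩ := Real.lt_sInf_add_pos (hSn jb) hδ
      exact ⟨v, hv, hc⟩
    choose v hv hlt using h1
    have h2 : ∑ jb : Σ j : P, Fin (w j), ∑ k : Fin L,
        (P11 k jb + P12.mulVec (v jb) k) ^ 2 ≤ ∑ jb, (sInf (S jb) + ε / (N + 1)) :=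
      Finset.sum_le_sum fun jb _ => (hlt jb).le
    rw [Finset.sum_add_distrib, Finset.sum_const, Finset.card_univ, nsmul_eq_mul] at h2
    have h3 : N * (ε / (N + 1)) ≤ ε := by
      rw [← mul_div_assoc, div_le_iff₀ (by positivity)]
      nlinarith
    refine le_trans (csInf_le ?_ ⟨fun x jb => v jb x, ?_, (key _).symm⟩) (h2.trans ?_)
    · refine ⟨0, ?_⟩
      rintro c ⟨Q, _, rfl⟩
      positivity
    · intro i a j b hij
      exact hv ⟨j, b⟩ i a hij
    · linarith
  · apply le_csInf
    · exact ⟨_, 0, fun _ _ _ _ _ => rfl, rfl⟩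
    · rintro c ⟨Q, hQ, rfl⟩
      rw [key]
      apply Finset.sum_le_sum
      intro jb _
      exact csInf_le (hSb jb) ⟨fun x => Q x jb, fun i a h => hQ i a jb.1 jb.2 h, rfl⟩
end

section
/- Let F be a field and let A, B, C be matrices over F of sizes N×N, N×p, and p×N respectively. Over RatFunc F, define Φ := 1 + C' * (X • 1 − A')⁻¹ * B' and Γ := 1 − C' * (X • 1 − (A' − B'*C'))⁻¹ * B', where primes denote entrywise application of the canonical ring map F → RatFunc F and X is the rational-function indeterminate (both X • 1 − A' and X • 1 − (A' − B'*C') are invertible because their determinants are images of characteristic polynomials). Then Φ * Γ = 1 and Γ * Φ = 1; that is, Φ and Γ are two-sided inverses of each other in the ring of p×p matrices over RatFunc F. -/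
set_option synthInstance.maxHeartbeats 1000000

theorem aux_det {F : Type*} [Field F] {N : ℕ} (A : Matrix (Fin N) (Fin N) F) :
    IsUnit ((RatFunc.X : RatFunc F) • (1 : Matrix (Fin N) (Fin N) (RatFunc F)) -
            A.map RatFunc.C).det := by
  have h : (RatFunc.X : RatFunc F) • (1 : Matrix (Fin N) (Fin N) (RatFunc F)) -
            A.map RatFunc.C
      = (algebraMap (Polynomial F) (RatFunc F)).mapMatrix A.charmatrix := by
    ext i j
    by_cases hij : i = j
    · subst hij
      simp [Matrix.charmatrix_apply_eq]
    · simp [Matrix.charmatrix_apply_ne _ _ _ hij, Matrix.one_apply_ne hij]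
  rw [h, ← RingHom.map_det, isUnit_iff_ne_zero]
  exact RatFunc.algebraMap_ne_zero A.charpoly_monic.ne_zero

theorem aux_inv {K : Type*} [Field K] {N p : ℕ} (P Q : Matrix (Fin N) (Fin N) K)
    (B : Matrix (Fin N) (Fin p) K) (C : Matrix (Fin p) (Fin N) K)
    (hP : IsUnit P.det) (hQ : IsUnit Q.det) (h : B * C = Q - P) :
    (1 + C * P⁻¹ * B) * (1 - C * Q⁻¹ * B) = 1 := by
  have h1 : (C * P⁻¹ * B) * (C * Q⁻¹ * B) = C * P⁻¹ * B - C * Q⁻¹ * B := by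
    calc (C * P⁻¹ * B) * (C * Q⁻¹ * B) = C * (P⁻¹ * (B * C) * Q⁻¹) * B := by
          simp only [Matrix.mul_assoc]
      _ = C * (P⁻¹ - Q⁻¹) * B := by
          rw [h, Matrix.mul_sub, Matrix.sub_mul, Matrix.nonsing_inv_mul _ hP, Matrix.mul_assoc P⁻¹,
            Matrix.mul_nonsing_inv _ hQ, Matrix.mul_one, Matrix.one_mul]
      _ = _ := by rw [Matrix.mul_sub, Matrix.sub_mul]
  rw [add_mul, mul_sub, mul_sub, h1, mul_one, one_mul, mul_one]
  abel


/-- The propagation filter `Φ = 1 + C (X·1 − A)⁻¹ B` and the differential filter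
`Γ = 1 − C (X·1 − (A − B C))⁻¹ B` are two-sided inverses of each other in the ring of
`p × p` matrices over the field of rational functions. -/
theorem propagation_differential_inverse {F : Type*} [Field F] {N p : ℕ}
    (A : Matrix (Fin N) (Fin N) F) (B : Matrix (Fin N) (Fin p) F)
    (C : Matrix (Fin p) (Fin N) F) :
    ((1 : Matrix (Fin p) (Fin p) (RatFunc F)) +
        C.map RatFunc.C *
          ((RatFunc.X : RatFunc F) • (1 : Matrix (Fin N) (Fin N) (RatFunc F)) -
            A.map RatFunc.C)⁻¹ * B.map RatFunc.C) *
      ((1 : Matrix (Fin p) (Fin p) (RatFunc F)) -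
        C.map RatFunc.C *
          ((RatFunc.X : RatFunc F) • (1 : Matrix (Fin N) (Fin N) (RatFunc F)) -
            (A.map RatFunc.C - B.map RatFunc.C * C.map RatFunc.C))⁻¹ * B.map RatFunc.C) = 1 ∧
    ((1 : Matrix (Fin p) (Fin p) (RatFunc F)) -
        C.map RatFunc.C *
          ((RatFunc.X : RatFunc F) • (1 : Matrix (Fin N) (Fin N) (RatFunc F)) -
            (A.map RatFunc.C - B.map RatFunc.C * C.map RatFunc.C))⁻¹ * B.map RatFunc.C) *
      ((1 : Matrix (Fin p) (Fin p) (RatFunc F)) +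
        C.map RatFunc.C *
          ((RatFunc.X : RatFunc F) • (1 : Matrix (Fin N) (Fin N) (RatFunc F)) -
            A.map RatFunc.C)⁻¹ * B.map RatFunc.C) = 1 := by
  have hm : A.map (RatFunc.C : F →+* RatFunc F) - B.map RatFunc.C * C.map RatFunc.C
      = (A - B * C).map RatFunc.C := by
    rw [Matrix.map_sub _ (map_sub _), Matrix.map_mul]
  have key := aux_inv _ _ (B.map (RatFunc.C : F →+* RatFunc F)) (C.map RatFunc.C)
    (aux_det A) (hm ▸ aux_det (A - B * C)) (by abel)
  exact ⟨key, mul_eq_one_comm.mp key⟩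
end

section
/- Let F be a field and let A, B, C, C₂, D be matrices over F of sizes N×N, N×p, p×N, q×N, and q×p respectively. Over RatFunc F (with primes denoting entrywise application of the canonical map F → RatFunc F and X the indeterminate), the following identity of q×p matrices holds: ((C₂' − D'*C') * (X • 1 − (A' − B'*C'))⁻¹ * B' + D') * (1 + C' * (X • 1 − A')⁻¹ * B') = C₂' * (X • 1 − A')⁻¹ * B' + D'. -/
set_option synthInstance.maxHeartbeats 1000000

theorem isUnit_det_aux {F : Type*} [Field F] {N : ℕ} (M : Matrix (Fin N) (Fin N) F) :
    IsUnit ((RatFunc.X : RatFunc F) • (1 : Matrix (Fin N) (Fin N) (RatFunc F)) -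
      M.map RatFunc.C).det := by
  have h : (RatFunc.X : RatFunc F) • (1 : Matrix (Fin N) (Fin N) (RatFunc F)) -
      M.map RatFunc.C =
      (algebraMap (Polynomial F) (RatFunc F)).mapMatrix M.charmatrix := by
    ext i j
    by_cases hij : i = j
    · subst hij
      simp [Matrix.charmatrix_apply_eq]
    · simp [Matrix.charmatrix_apply_ne _ _ _ hij, Matrix.one_apply_ne hij]
  rw [h, ← RingHom.map_det, isUnit_iff_ne_zero]
  exact RatFunc.algebraMap_ne_zero M.charpoly_monic.ne_zero

theorem alg_aux {K : Type*} [Field K] {N p q : ℕ}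
    (S T : Matrix (Fin N) (Fin N) K) (B : Matrix (Fin N) (Fin p) K)
    (C : Matrix (Fin p) (Fin N) K) (C₂ : Matrix (Fin q) (Fin N) K)
    (D : Matrix (Fin q) (Fin p) K) (hS : IsUnit S.det) (hT : IsUnit T.det)
    (h : T = S + B * C) :
    ((C₂ - D * C) * T⁻¹ * B + D) * (1 + C * S⁻¹ * B) = C₂ * S⁻¹ * B + D := by
  have h1 : B * (1 + C * S⁻¹ * B) = T * (S⁻¹ * B) := by
    rw [h, Matrix.mul_add, Matrix.add_mul, Matrix.mul_nonsing_inv_cancel_left _ _ hS]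
    simp only [Matrix.mul_assoc, Matrix.mul_one]
  rw [Matrix.add_mul, Matrix.mul_assoc _ B, h1, Matrix.mul_assoc _ T⁻¹,
    Matrix.nonsing_inv_mul_cancel_left _ _ hT]
  simp only [Matrix.mul_add, Matrix.sub_mul, Matrix.mul_assoc, Matrix.mul_one]
  abel

/-- The coprime-factorization identity: for matrices `A, B, C, C₂, D` over a field `F`,
over the field of rational functions one has
`((C₂ − D C)(X·1 − (A − B C))⁻¹ B + D)(1 + C (X·1 − A)⁻¹ B) = C₂ (X·1 − A)⁻¹ B + D`. -/
theorem coprime_factorization_identity {F : Type*} [Field F] {N p q : ℕ}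
    (A : Matrix (Fin N) (Fin N) F) (B : Matrix (Fin N) (Fin p) F)
    (C : Matrix (Fin p) (Fin N) F) (C₂ : Matrix (Fin q) (Fin N) F)
    (D : Matrix (Fin q) (Fin p) F) :
    ((C₂.map RatFunc.C - D.map RatFunc.C * C.map RatFunc.C) *
        ((RatFunc.X : RatFunc F) • (1 : Matrix (Fin N) (Fin N) (RatFunc F)) -
          (A.map RatFunc.C - B.map RatFunc.C * C.map RatFunc.C))⁻¹ * B.map RatFunc.C +
      D.map RatFunc.C) *
    ((1 : Matrix (Fin p) (Fin p) (RatFunc F)) +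
      C.map RatFunc.C *
        ((RatFunc.X : RatFunc F) • (1 : Matrix (Fin N) (Fin N) (RatFunc F)) -
          A.map RatFunc.C)⁻¹ * B.map RatFunc.C) =
    C₂.map RatFunc.C *
      ((RatFunc.X : RatFunc F) • (1 : Matrix (Fin N) (Fin N) (RatFunc F)) -
        A.map RatFunc.C)⁻¹ * B.map RatFunc.C + D.map RatFunc.C := by
  have hT := isUnit_det_aux (A - B * C)
  have e : (A - B * C).map RatFunc.C =
      A.map RatFunc.C - B.map RatFunc.C * C.map (RatFunc.C : F →+* RatFunc F) := by
    rw [Matrix.map_sub _ (map_sub _), Matrix.map_mul]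
  rw [e] at hT
  exact alg_aux _ _ _ _ _ _ (isUnit_det_aux A) hT (by abel)
end

section
/- Let P be a finite partially ordered set, m, w : P → ℕ, L : ℕ, and let P11 : Matrix (Fin L) (Σ j : P, Fin (w j)) (RatFunc ℝ) and P12 : Matrix (Fin L) (Σ i : P, Fin (m i)) (RatFunc ℝ) be matrices of real rational functions. For a matrix (or column vector) H with entries in RatFunc ℝ, define its H₂ cost J(H) := ∫⁻_{ω ∈ ℝ} ENNReal.ofReal( ∑_{entries h of H} Complex.normSq( h evaluated at the point I*ω via the ring map ℝ → ℂ, with evaluation defined to be 0 at poles) ) dω, a value in ℝ≥0∞. Then the infimum, over all block matrices Q : Matrix (Σ i, Fin (m i)) (Σ j, Fin (w j)) (RatFunc ℝ) lying in the block incidence algebra I(P), of J(P11 + P12 * Q), equals the sum over all column indices (j,b) of the infimum, over all vectors v : (Σ i : P, Fin (m i)) → RatFunc ℝ satisfying v (i,a) = 0 whenever ¬ (j ≤ i), of J of the column vector (fun k => P11 k (j,b) + (P12.mulVec v) k). -/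
open scoped ENNReal

/-- The `H₂` cost of a matrix of real rational functions: the Lebesgue integral over the
imaginary axis of the squared Frobenius norm of the matrix evaluated at `I·ω` (evaluation
of a rational function at a pole is defined to be `0`). -/
noncomputable def H2cost {α β : Type*} [Fintype α] [Fintype β]
    (H : Matrix α β (RatFunc ℝ)) : ℝ≥0∞ :=
  ∫⁻ ω : ℝ, ENNReal.ofReal (∑ a : α, ∑ b : β,
    Complex.normSq (RatFunc.eval (algebraMap ℝ ℂ) (Complex.I * (ω : ℂ)) (H a b)))

theorem measurable_aux (f : RatFunc ℝ) : Measurable fun ω : ℝ =>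
    ENNReal.ofReal (Complex.normSq
      (RatFunc.eval (algebraMap ℝ ℂ) (Complex.I * (ω : ℂ)) f)) := by
  have h : ∀ p : Polynomial ℝ, Measurable fun ω : ℝ =>
      p.eval₂ (algebraMap ℝ ℂ) (Complex.I * (ω : ℂ)) := by
    intro p
    simp only [Polynomial.eval₂_eq_sum_range]
    fun_prop
  have h2 : Measurable fun ω : ℝ =>
      RatFunc.eval (algebraMap ℝ ℂ) (Complex.I * (ω : ℂ)) f := by
    unfold RatFunc.eval
    exact (h _).div (h _)
  exact ENNReal.measurable_ofReal.comp (Complex.continuous_normSq.measurable.comp h2)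

theorem H2cost_eq_sum {α β : Type*} [Fintype α] [Fintype β]
    (H : Matrix α β (RatFunc ℝ)) : H2cost H = ∑ b : β, ∑ a : α,
      ∫⁻ ω : ℝ, ENNReal.ofReal (Complex.normSq
        (RatFunc.eval (algebraMap ℝ ℂ) (Complex.I * (ω : ℂ)) (H a b))) := by
  have h1 : ∀ b : β, ∑ a : α, ∫⁻ ω : ℝ, ENNReal.ofReal (Complex.normSq
        (RatFunc.eval (algebraMap ℝ ℂ) (Complex.I * (ω : ℂ)) (H a b))) =
      ∫⁻ ω : ℝ, ∑ a : α, ENNReal.ofReal (Complex.normSq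
        (RatFunc.eval (algebraMap ℝ ℂ) (Complex.I * (ω : ℂ)) (H a b))) := fun b =>
    (MeasureTheory.lintegral_finsetSum _ (fun a _ => measurable_aux (H a b))).symm
  rw [Finset.sum_congr rfl (fun b _ => h1 b), ← MeasureTheory.lintegral_finsetSum]
  · unfold H2cost
    congr 1
    ext ω
    rw [Finset.sum_comm, ENNReal.ofReal_sum_of_nonneg]
    · refine Finset.sum_congr rfl fun a _ => ?_
      rw [ENNReal.ofReal_sum_of_nonneg]
      intro i _
      exact Complex.normSq_nonneg _
    · intro i _
      exact Finset.sum_nonneg fun _ _ => Complex.normSq_nonneg _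
  · intro b _
    exact Finset.measurable_sum _ fun a _ => measurable_aux (H a b)

theorem sInf_le_sum_aux {ι : Type*} (s : Finset ι) (S : ι → Set ℝ≥0∞)
    (hne : ∀ i, (S i).Nonempty) (x : ℝ≥0∞)
    (hx : ∀ c : ι → ℝ≥0∞, (∀ i, c i ∈ S i) → x ≤ ∑ i ∈ s, c i) :
    x ≤ ∑ i ∈ s, sInf (S i) := by
  have hex : ∀ i, ∃ u : ℕ → ℝ≥0∞, Antitone u ∧
      Filter.Tendsto u Filter.atTop (nhds (sInf (S i))) ∧ ∀ n, u n ∈ S i := by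
    intro i
    exact exists_seq_tendsto_sInf (hne i) (OrderBot.bddBelow _)
  choose u _ hu hm using hex
  have ht : Filter.Tendsto (fun n => ∑ i ∈ s, u i n) Filter.atTop
      (nhds (∑ i ∈ s, sInf (S i))) := tendsto_finsetSum _ fun i _ => hu i
  exact ge_of_tendsto' ht fun n => hx _ fun i => hm i n

/-- Column-wise separability of the `H₂`-optimal control problem over the block incidence
algebra: the infimum of the `H₂` cost of `P11 + P12 Q` over all `Q` in the incidence
algebra equals the sum over columns of the infima of the corresponding column problems,
in which only the sparsity pattern of the single column is enforced. -/
theorem H2_separability {P : Type*} [PartialOrder P] [Fintype P] [DecidableEq P]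
    (m w : P → ℕ) (L : ℕ)
    (P11 : Matrix (Fin L) (Σ j : P, Fin (w j)) (RatFunc ℝ))
    (P12 : Matrix (Fin L) (Σ i : P, Fin (m i)) (RatFunc ℝ)) :
    sInf {c : ℝ≥0∞ | ∃ Q : Matrix (Σ i : P, Fin (m i)) (Σ j : P, Fin (w j)) (RatFunc ℝ),
        BlockIncidence Q ∧ c = H2cost (P11 + P12 * Q)} =
    ∑ jb : Σ j : P, Fin (w j),
      sInf {c : ℝ≥0∞ | ∃ v : (Σ i : P, Fin (m i)) → RatFunc ℝ,
        (∀ (i : P) (a : Fin (m i)), ¬ (jb.1 ≤ i) → v ⟨i, a⟩ = 0) ∧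
        c = H2cost (Matrix.of fun (k : Fin L) (_ : Unit) => P11 k jb + P12.mulVec v k)} := by
  have key : ∀ Q : Matrix (Σ i : P, Fin (m i)) (Σ j : P, Fin (w j)) (RatFunc ℝ),
      H2cost (P11 + P12 * Q) = ∑ jb : Σ j : P, Fin (w j),
        H2cost (Matrix.of fun (k : Fin L) (_ : Unit) =>
          P11 k jb + P12.mulVec (fun i => Q i jb) k) := by
    intro Q
    rw [H2cost_eq_sum]
    refine Finset.sum_congr rfl fun jb _ => ?_
    rw [H2cost_eq_sum]
    simp only [Finset.univ_unique, Finset.sum_singleton]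
    rfl
  apply le_antisymm
  · apply sInf_le_sum_aux
    · intro jb
      exact ⟨_, 0, fun _ _ _ => rfl, rfl⟩
    · intro c hc
      choose v hv hcv using hc
      refine sInf_le ⟨Matrix.of fun i jb => v jb i, fun i a j b h => hv ⟨j, b⟩ i a h, ?_⟩
      rw [key]
      exact Finset.sum_congr rfl fun jb _ => hcv jb
  · apply le_sInf
    rintro _ ⟨Q, hQ, rfl⟩
    rw [key]
    refine Finset.sum_le_sum fun jb _ => sInf_le ⟨fun i => Q i jb, ?_, rfl⟩
    intro i a h
    exact hQ i a jb.1 jb.2 h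
end
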